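/- Let W_u be a Walecki tournament and let a be the arc of W_u between vertices i, j ∈ ZMod n, where i and j have opposite parity and are not consecutive (j ∉ {i−1, i+1}). Suppose i, j, and ℓ ∈ ZMod n induce a directed triangle in W_u. Then one of the following holds: (1) d(a) > 1; (2) ℓ ∈ {i−1, i+1, j−1, j+1}; (3) 3 divides 2m+1 and there exist i', j' with {i', j'} = {i, j} (as sets), j' = i' + (2m+1)/3 (the integer (2m+1)/3 reduced mod n), and ℓ = 2j' − i' − 1; or (4) 3 divides 4m+1 and there exist i', j' with {i', j'} = {i, j}, j' = i' + (4m+1)/3 (reduced mod n), and ℓ = 2j' − i' − 1. -/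

import Mathlib

/-- Vertex set of the Walecki tournament on `2*m+1` vertices:
`ZMod (2*m)` together with the extra vertex `*`, encoded as `none`. -/
abbrev WVert (m : ℕ) := Option (ZMod (2 * m))

/-- The arc relation of the directed Hamilton cycle `C_j⁺`:
it has arcs `(*, j)` and `(j+m, *)`, together with the arcs `(j−k, j+k+1)` for
`0 ≤ k ≤ m−1` and `(j+k, j−k)` for `1 ≤ k ≤ m−1` (arithmetic in `ZMod (2*m)`). -/
def Cplus (m : ℕ) (j : ZMod (2 * m)) (x y : WVert m) : Prop :=
  (x = none ∧ y = some j) ∨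
  (x = some (j + (m : ZMod (2 * m))) ∧ y = none) ∨
  (∃ k : ℕ, k ≤ m - 1 ∧ x = some (j - (k : ZMod (2 * m))) ∧
    y = some (j + (k : ZMod (2 * m)) + 1)) ∨
  (∃ k : ℕ, 1 ≤ k ∧ k ≤ m - 1 ∧ x = some (j + (k : ZMod (2 * m))) ∧
    y = some (j - (k : ZMod (2 * m))))

/-- The arc relation of the Walecki tournament `W_u` with signature `u ∈ (ZMod 2)^m`:
the arcs of `C_j⁺` when `u_j = 1`, and the arcs of `C_j⁻` (the reverse of `C_j⁺`)
when `u_j = 0`, for `0 ≤ j ≤ m−1`. -/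
def warc (m : ℕ) (u : Fin m → ZMod 2) (x y : WVert m) : Prop :=
  ∃ j : Fin m, (u j = 1 ∧ Cplus m ((j : ℕ) : ZMod (2 * m)) x y) ∨
               (u j = 0 ∧ Cplus m ((j : ℕ) : ZMod (2 * m)) y x)

/-- `d(a)` for the arc `a = (x,y)`: the number of vertices `z ≠ x, y` such that
`(y,z)` and `(z,x)` are both arcs, i.e. `x, y, z` span a directed triangle. -/
noncomputable def dcount {α : Type*} (arc : α → α → Prop) (x y : α) : ℕ :=
  {z : α | z ≠ x ∧ z ≠ y ∧ arc y z ∧ arc z x}.ncard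

/-- `i(a)` for the arc `a = (x,y)`: the number of vertices `z ≠ x, y` with arcs
`(z,x)` and `(z,y)`. -/
noncomputable def icount {α : Type*} (arc : α → α → Prop) (x y : α) : ℕ :=
  {z : α | z ≠ x ∧ z ≠ y ∧ arc z x ∧ arc z y}.ncard

/-- `o(a)` for the arc `a = (x,y)`: the number of vertices `z ≠ x, y` with arcs
`(x,z)` and `(y,z)`. -/
noncomputable def ocount {α : Type*} (arc : α → α → Prop) (x y : α) : ℕ :=
  {z : α | z ≠ x ∧ z ≠ y ∧ arc x z ∧ arc y z}.ncard

/-- `b(a)` for the arc `a = (x,y)`: the number of vertices `z ≠ x, y` with arcs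
`(x,z)` and `(z,y)`. -/
noncomputable def bcount {α : Type*} (arc : α → α → Prop) (x y : α) : ℕ :=
  {z : α | z ≠ x ∧ z ≠ y ∧ arc x z ∧ arc z y}.ncard

/-- Two elements of `ZMod (2*m)` have the same parity if their difference is
twice an element of `ZMod (2*m)`. -/
def sameParity (m : ℕ) (x y : ZMod (2 * m)) : Prop :=
  ∃ c : ZMod (2 * m), x - y = 2 * c

/-- Three distinct vertices `x, y, z` induce a directed triangle:
the three arcs among them form a directed 3-cycle. -/
def dirTri {α : Type*} (arc : α → α → Prop) (x y z : α) : Prop :=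
  x ≠ y ∧ y ≠ z ∧ x ≠ z ∧
    ((arc x y ∧ arc y z ∧ arc z x) ∨ (arc x z ∧ arc z y ∧ arc y x))

/-- The all-ones signature `1_m`. -/
def onesSig (m : ℕ) : Fin m → ZMod 2 := fun _ => 1

/-- The complementing register shift `R_1`:
`uR_1 = (1 − u_{m−1}, u_0, u_1, …, u_{m−2})`. -/
def shift1 (m : ℕ) (u : Fin m → ZMod 2) : Fin m → ZMod 2 := fun i =>
  if (i : ℕ) = 0 then 1 - u ⟨m - 1, Nat.sub_lt i.pos Nat.one_pos⟩
  else u ⟨(i : ℕ) - 1, lt_of_le_of_lt (Nat.sub_le _ _) i.isLt⟩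

/-- The inverse of the complementing register shift `R_1`:
`(uR_1⁻¹)_i = u_{i+1}` for `i < m−1` and `(uR_1⁻¹)_{m−1} = 1 − u_0`. -/
def unshift1 (m : ℕ) (u : Fin m → ZMod 2) : Fin m → ZMod 2 := fun i =>
  if h : (i : ℕ) = m - 1 then 1 - u ⟨0, i.pos⟩
  else u ⟨(i : ℕ) + 1, by have h1 := i.isLt; omega⟩

/-- `R_t` for an integer `t`: the `t`-th iterate of the complementing register
shift `R_1` (inverse iterates when `t` is negative). `Rshift m t u = u R_t`. -/
def Rshift (m : ℕ) (t : ℤ) (u : Fin m → ZMod 2) : Fin m → ZMod 2 :=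
  if 0 ≤ t then (shift1 m)^[t.toNat] u else (unshift1 m)^[(-t).toNat] u

/-- The permutation `σ = (0 1 2 ⋯ m−1)(n−1 n−2 ⋯ m)` of the vertex set:
it fixes `*`, maps `k ↦ k+1` for `0 ≤ k ≤ m−2`, `m−1 ↦ 0`,
`k ↦ k−1` for `m+1 ≤ k ≤ n−1`, and `m ↦ n−1`. -/
def sigmaFun (m : ℕ) : WVert m → WVert m
  | none => none
  | some x =>
      if x.val < m then some ((((x.val + 1) % m : ℕ)) : ZMod (2 * m))
      else some (((m + (x.val - m + (m - 1)) % m : ℕ)) : ZMod (2 * m))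

/-- The inverse of the permutation `σ`. -/
def sigmaInvFun (m : ℕ) : WVert m → WVert m
  | none => none
  | some x =>
      if x.val < m then some ((((x.val + (m - 1)) % m : ℕ)) : ZMod (2 * m))
      else some (((m + (x.val - m + 1) % m : ℕ)) : ZMod (2 * m))

/-- `σ^t` for an integer `t`: the `t`-th iterate of `σ`
(inverse iterates when `t` is negative). -/
def sigmaZ (m : ℕ) (t : ℤ) : WVert m → WVert m :=
  if 0 ≤ t then (sigmaFun m)^[t.toNat] else (sigmaInvFun m)^[(-t).toNat]

/-! Since `C_{c+m}⁺` is the reverse of `C_c⁺`, the tournament `W_u` is the union of the cycles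
`C_c⁺` over a set of indices in `ZMod (2 * m)` that contains exactly one of `c`, `c + m` for every
`c`. Each vertex has one out-arc on each of these cycles, so `W_u` is regular. For an arc
`x → y` of a regular tournament there are `d(x, y)` vertices dominated by `y` and not by `x`, and as
many dominated by `x` and not by `y`. So, besides the apex of a directed triangle on `x → y`, any
further vertex on which `x` and `y` disagree gives `d(x, y) > 1`.

Let `j = i + 2q + 1` be nonconsecutive to `i` and put `c = i + q + 1`. The arcs from `i` to `i + 1`,
`j + 1`, `*` have indices `i`, `c + m`, `i + m`, and those from `j` have indices `c`, `j`, `j + m`.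
If `i` and `j` agreed at all three vertices, then of the indices `i`, `c`, `j` the set would
contain both or neither of `i`, `c`, exactly one of `c`, `j`, and both or neither of `i`, `j`. -/

/-- A tournament, given by its arc relation: a loopless digraph with exactly one arc between any two
distinct vertices. -/
structure IsTournament {α : Type*} (arc : α → α → Prop) : Prop where
  irrefl : ∀ x, ¬ arc x x
  swap_iff : ∀ {x y}, x ≠ y → (arc y x ↔ ¬ arc x y)

/-- The out-neighbourhood `N⁺(x)` of a vertex of a digraph given by its arc relation. -/
def outNbhd {α : Type*} (arc : α → α → Prop) (x : α) : Set α := {z | arc x z}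

section Tournament

variable {α : Type*} {arc : α → α → Prop} {x y z w : α}

theorem dirTri.swap (h : dirTri arc x y z) : dirTri arc y x z :=
  ⟨h.1.symm, h.2.2.1, h.2.1, h.2.2.2.symm.imp (fun ⟨h₁, h₂, h₃⟩ => ⟨h₃, h₁, h₂⟩)
    (fun ⟨h₁, h₂, h₃⟩ => ⟨h₂, h₃, h₁⟩)⟩

namespace IsTournament

theorem asymm (T : IsTournament arc) (h : arc x y) : ¬ arc y x := by
  have hne : x ≠ y := by rintro rfl; exact T.irrefl _ h
  exact fun h' => (T.swap_iff hne).1 h' h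

theorem arc_of_dirTri (T : IsTournament arc) (hxy : arc x y) (h : dirTri arc x y z) :
    arc y z ∧ arc z x := by
  obtain ⟨-, -, -, h | h⟩ := h
  · exact h.2
  · exact absurd h.2.2 (T.asymm hxy)

theorem dcount_eq_ncard_sdiff (T : IsTournament arc) (hxy : arc x y) :
    dcount arc x y = (outNbhd arc y \ outNbhd arc x).ncard := by
  refine congrArg Set.ncard (Set.ext fun z => ⟨?_, ?_⟩)
  · rintro ⟨-, -, hyz, hzx⟩
    exact ⟨hyz, T.asymm hzx⟩
  · rintro ⟨hyz, hxz⟩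
    have hzx : z ≠ x := by rintro rfl; exact T.asymm hxy hyz
    have hzy : z ≠ y := by rintro rfl; exact T.irrefl _ hyz
    exact ⟨hzx, hzy, hyz, (T.swap_iff hzx.symm).2 hxz⟩

theorem one_lt_dcount [Finite α] (T : IsTournament arc)
    (hdeg : (outNbhd arc x).ncard = (outNbhd arc y).ncard)
    (hxy : arc x y) (hyz : arc y z) (hzx : arc z x) (hwy : w ≠ y) (hwz : w ≠ z)
    (hw : ¬ (arc x w ↔ arc y w)) : 1 < dcount arc x y := by
  have hsdiff : (outNbhd arc x \ outNbhd arc y).ncard = (outNbhd arc y \ outNbhd arc x).ncard :=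
    (Set.ncard_eq_ncard_iff_ncard_sdiff_eq_ncard_sdiff).1 hdeg
  rw [T.dcount_eq_ncard_sdiff hxy]
  by_cases hyw : arc y w
  · have hxw : ¬ arc x w := fun hxw => hw (iff_of_true hxw hyw)
    rw [Set.one_lt_ncard]
    exact ⟨w, ⟨hyw, hxw⟩, z, ⟨hyz, T.asymm hzx⟩, hwz⟩
  · have hxw : arc x w := by_contra fun hxw => hw (iff_of_false hxw hyw)
    rw [← hsdiff, Set.one_lt_ncard]
    exact ⟨w, ⟨hxw, hyw⟩, y, ⟨hxy, T.irrefl y⟩, hwy⟩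

end IsTournament

end Tournament

section Cycles

variable {m : ℕ}

theorem zmod_half_add_half : (m : ZMod (2 * m)) + m = 0 := by
  have h := ZMod.natCast_self (2 * m)
  push_cast at h
  linear_combination h

theorem zmod_add_half_add_half (c : ZMod (2 * m)) : c + m + m = c := by
  rw [add_assoc, zmod_half_add_half, add_zero]

theorem zmod_eq_of_natCast_eq {n a b : ℕ} (ha : a < n) (hb : b < n)
    (h : (a : ZMod n) = b) : a = b :=
  CharP.natCast_injOn_Iio (ZMod n) n ha hb h

theorem zmod_half_ne_zero [NeZero m] : (m : ZMod (2 * m)) ≠ 0 := by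
  have hm := NeZero.pos m
  intro h
  exact hm.ne' (zmod_eq_of_natCast_eq (by omega) (by omega) (h.trans Nat.cast_zero.symm))

theorem zmod_exists_eq_or_eq_add_half [NeZero m] (c : ZMod (2 * m)) :
    ∃ k < m, c = k ∨ c = k + m := by
  have hc := c.val_lt
  rcases lt_or_ge c.val m with h | h
  · exact ⟨c.val, h, .inl (ZMod.natCast_zmod_val c).symm⟩
  · refine ⟨c.val - m, by omega, .inr ?_⟩
    rw [← Nat.cast_add, Nat.sub_add_cancel h, ZMod.natCast_zmod_val]

namespace Cplus

variable {c c' : ZMod (2 * m)} {x y y' : WVert m}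

theorem sub_to_add_add_one {a b : ZMod (2 * m)} {k : ℕ} (hk : k < m) (ha : a = c - k)
    (hb : b = c + k + 1) : Cplus m c (some a) (some b) :=
  .inr (.inr (.inl ⟨k, by omega, congrArg some ha, congrArg some hb⟩))

theorem add_to_sub {a b : ZMod (2 * m)} {k : ℕ} (hk₀ : 0 < k) (hk : k < m) (ha : a = c + k)
    (hb : b = c - k) : Cplus m c (some a) (some b) :=
  .inr (.inr (.inr ⟨k, hk₀, by omega, congrArg some ha, congrArg some hb⟩))

theorem to_star (a : ZMod (2 * m)) : Cplus m (a + m) (some a) none :=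
  .inr (.inl ⟨by rw [zmod_add_half_add_half], rfl⟩)

theorem not_none_none : ¬ Cplus m c none none := by simp [Cplus]

theorem none_some_iff {b : ZMod (2 * m)} : Cplus m c none (some b) ↔ b = c := by simp [Cplus]

theorem some_none_iff {a : ZMod (2 * m)} : Cplus m c (some a) none ↔ a = c + m := by simp [Cplus]

variable [NeZero m]

theorem to_add_one (a : ZMod (2 * m)) : Cplus m a (some a) (some (a + 1)) :=
  sub_to_add_add_one (NeZero.pos m) (by simp) (by simp)

theorem reverse (h : Cplus m c x y) : Cplus m (c + m) y x := by
  have hm := NeZero.pos m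
  have h₀ := zmod_half_add_half (m := m)
  rcases h with ⟨rfl, rfl⟩ | ⟨rfl, rfl⟩ | ⟨k, hk, rfl, rfl⟩ | ⟨k, hk₁, hk, rfl, rfl⟩
  · exact to_star c
  · exact .inl ⟨rfl, rfl⟩
  · obtain ⟨l, rfl⟩ : ∃ l, m = k + l + 1 := ⟨m - k - 1, by omega⟩
    push_cast at h₀ ⊢
    exact sub_to_add_add_one (k := l) (by omega) (by ring) (by linear_combination -h₀)
  · obtain ⟨l, rfl⟩ : ∃ l, m = k + l := ⟨m - k, by omega⟩
    push_cast at h₀ ⊢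
    exact add_to_sub (k := l) (by omega) (by omega) (by linear_combination -h₀) (by ring)

theorem val_sub_of_some_some {a b : ZMod (2 * m)} (h : Cplus m c (some a) (some b)) :
    (b - a).val = 2 * (c - a).val + 1 ∨
      m < (c - a).val ∧ (b - a).val + 2 * m = 2 * (c - a).val := by
  have hm := NeZero.pos m
  have hn : ((2 * m : ℕ) : ZMod (2 * m)) = 0 := ZMod.natCast_self _
  simp only [Cplus, reduceCtorEq, false_and, and_false, false_or, Option.some.injEq] at h
  obtain ⟨k, hk, rfl, rfl⟩ | ⟨k, hk₀, hk, rfl, rfl⟩ := h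
  · have hc : c - (c - k) = (k : ℕ) := by ring
    have hb : c + k + 1 - (c - k) = (2 * k + 1 : ℕ) := by push_cast; ring
    rw [hc, hb, ZMod.val_cast_of_lt (by omega), ZMod.val_cast_of_lt (by omega)]
    exact .inl rfl
  · have hc : c - (c + k) = (2 * m - k : ℕ) := by rw [Nat.cast_sub (by omega), hn]; ring
    have hb : c - k - (c + k) = (2 * m - 2 * k : ℕ) := by
      rw [Nat.cast_sub (by omega), hn]; push_cast; ring
    rw [hc, hb, ZMod.val_cast_of_lt (by omega), ZMod.val_cast_of_lt (by omega)]
    omega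

theorem val_sub_of_some_none {a : ZMod (2 * m)} (h : Cplus m c (some a) none) :
    (c - a).val = m := by
  have hm := NeZero.pos m
  obtain rfl := some_none_iff.1 h
  have hc : c - (c + m) = (m : ZMod (2 * m)) := by
    linear_combination -zmod_half_add_half (m := m)
  rw [hc, ZMod.val_cast_of_lt (by omega)]

theorem index_unique (h : Cplus m c x y) (h' : Cplus m c' x y) : c = c' := by
  rcases x with _ | a <;> rcases y with _ | b
  · exact absurd h not_none_none
  · exact (none_some_iff.1 h).symm.trans (none_some_iff.1 h')
  · exact add_right_cancel ((some_none_iff.1 h).symm.trans (some_none_iff.1 h'))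
  · have hval : (c - a).val = (c' - a).val := by
      rcases h.val_sub_of_some_some with h | h <;> rcases h'.val_sub_of_some_some with h' | h' <;>
        omega
    exact sub_left_injective (ZMod.val_injective _ hval)

theorem target_unique (h : Cplus m c x y) (h' : Cplus m c x y') : y = y' := by
  have none_of_none {a : ZMod (2 * m)} {z : WVert m} (h : Cplus m c (some a) none)
      (hz : Cplus m c (some a) z) : z = none := by
    rcases z with _ | b
    · rfl
    · have hb := (b - a).val_lt
      have hc := h.val_sub_of_some_none
      rcases hz.val_sub_of_some_some with hz | hz <;> omega
  rcases x with _ | a <;> rcases y with _ | b <;> rcases y' with _ | b'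
  · rfl
  · exact absurd h not_none_none
  · exact absurd h' not_none_none
  · rw [none_some_iff.1 h, none_some_iff.1 h']
  · rfl
  · exact (none_of_none h h').symm
  · exact none_of_none h' h
  · have hb := (b - a).val_lt
    have hb' := (b' - a).val_lt
    have hval : (b - a).val = (b' - a).val := by
      rcases h.val_sub_of_some_some with h | h <;> rcases h'.val_sub_of_some_some with h' | h' <;>
        omega
    exact congrArg some (sub_left_injective (ZMod.val_injective _ hval))

theorem exists_target (c : ZMod (2 * m)) (x : WVert m) : ∃ y, Cplus m c x y := by
  rcases x with _ | a
  · exact ⟨some c, .inl ⟨rfl, rfl⟩⟩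
  obtain ⟨k, hk, h | h⟩ := zmod_exists_eq_or_eq_add_half (c - a)
  · exact ⟨some (c + k + 1), sub_to_add_add_one hk (by linear_combination -h) rfl⟩
  rcases Nat.eq_zero_or_pos k with rfl | hk₀
  · obtain rfl : c = a + m := by push_cast at h; linear_combination h
    exact ⟨none, to_star a⟩
  · refine ⟨some (c - (m - k : ℕ)), add_to_sub (by omega) (by omega) ?_ rfl⟩
    rw [Nat.cast_sub hk.le]
    linear_combination -h - zmod_half_add_half (m := m)

theorem ne (h : Cplus m c x y) : x ≠ y := by
  rintro rfl
  exact zmod_half_ne_zero (left_eq_add.1 (h.index_unique h.reverse))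

theorem exists_index (hxy : x ≠ y) : ∃ c, Cplus m c x y := by
  choose f hf using fun c => exists_target c x
  have hinj : f.Injective := fun c c' h => (hf c).index_unique (h ▸ hf c')
  have hrange : Set.range f = {x}ᶜ := by
    refine Set.eq_of_subset_of_ncard_le ?_ ?_
    · rintro _ ⟨c, rfl⟩
      exact (hf c).ne.symm
    · rw [Set.ncard_range_of_injective hinj, Set.ncard_compl]
      simp
  obtain ⟨c, rfl⟩ : y ∈ Set.range f := hrange ▸ hxy.symm
  exact ⟨c, hf c⟩

end Cplus

end Cycles

section Walecki

variable {m : ℕ} {u : Fin m → ZMod 2}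

/-- The signature `u` extended to `ZMod (2 * m)`, as a set: the indices `c` such that `C_c⁺` is one
of the cycles of `W_u`, where an index `j + m` stands for the reversed cycle, `C_{j+m}⁺ = C_j⁻`. -/
def extendedSignature (u : Fin m → ZMod 2) : Set (ZMod (2 * m)) :=
  {c | ∃ j : Fin m, (u j = 1 ∧ c = (j : ℕ)) ∨ (u j = 0 ∧ c = (j : ℕ) + m)}

theorem natCast_mem_extendedSignature (j : Fin m) :
    ((j : ℕ) : ZMod (2 * m)) ∈ extendedSignature u ↔ u j = 1 := by
  refine ⟨?_, fun h => ⟨j, .inl ⟨h, rfl⟩⟩⟩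
  rintro ⟨k, ⟨hk, h⟩ | ⟨-, h⟩⟩
  · rwa [Fin.ext (zmod_eq_of_natCast_eq (by omega) (by omega) h)]
  · rw [← Nat.cast_add] at h
    have := zmod_eq_of_natCast_eq (by omega) (by omega) h
    omega

theorem natCast_add_half_mem_extendedSignature (j : Fin m) :
    ((j : ℕ) : ZMod (2 * m)) + m ∈ extendedSignature u ↔ u j = 0 := by
  refine ⟨?_, fun h => ⟨j, .inr ⟨h, rfl⟩⟩⟩
  rintro ⟨k, ⟨-, h⟩ | ⟨hk, h⟩⟩
  · rw [← Nat.cast_add] at h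
    have := zmod_eq_of_natCast_eq (by omega) (by omega) h
    omega
  · rwa [Fin.ext (zmod_eq_of_natCast_eq (by omega) (by omega) (add_right_cancel h))]

variable [NeZero m]

theorem add_half_mem_extendedSignature_iff (c : ZMod (2 * m)) :
    c + m ∈ extendedSignature u ↔ c ∉ extendedSignature u := by
  have eq_zero_iff : ∀ t : ZMod 2, t = 0 ↔ t ≠ 1 := by decide
  obtain ⟨k, hk, rfl | rfl⟩ := zmod_exists_eq_or_eq_add_half c
  · rw [natCast_add_half_mem_extendedSignature ⟨k, hk⟩, natCast_mem_extendedSignature ⟨k, hk⟩,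
      eq_zero_iff]
  · rw [zmod_add_half_add_half, natCast_add_half_mem_extendedSignature ⟨k, hk⟩,
      natCast_mem_extendedSignature ⟨k, hk⟩, eq_zero_iff, not_not]

theorem warc_iff_exists_cplus {x y : WVert m} :
    warc m u x y ↔ ∃ c ∈ extendedSignature u, Cplus m c x y := by
  constructor
  · rintro ⟨j, ⟨hj, h⟩ | ⟨hj, h⟩⟩
    · exact ⟨_, ⟨j, .inl ⟨hj, rfl⟩⟩, h⟩
    · exact ⟨_, ⟨j, .inr ⟨hj, rfl⟩⟩, h.reverse⟩
  · rintro ⟨_, ⟨j, ⟨hj, rfl⟩ | ⟨hj, rfl⟩⟩, h⟩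
    · exact ⟨j, .inl ⟨hj, h⟩⟩
    · exact ⟨j, .inr ⟨hj, zmod_add_half_add_half ((j : ℕ) : ZMod (2 * m)) ▸ h.reverse⟩⟩

theorem Cplus.warc_iff {c : ZMod (2 * m)} {x y : WVert m} (h : Cplus m c x y) :
    warc m u x y ↔ c ∈ extendedSignature u := by
  refine warc_iff_exists_cplus.trans ⟨?_, fun hc => ⟨c, hc, h⟩⟩
  rintro ⟨c', hc', h'⟩
  rwa [h.index_unique h']

theorem isTournament_warc : IsTournament (warc m u) where
  irrefl x h := by
    obtain ⟨c, -, hc⟩ := warc_iff_exists_cplus.1 h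
    exact hc.ne rfl
  swap_iff hxy := by
    obtain ⟨c, hc⟩ := Cplus.exists_index hxy
    rw [hc.reverse.warc_iff, hc.warc_iff, add_half_mem_extendedSignature_iff]

theorem ncard_outNbhd_warc (x : WVert m) :
    (outNbhd (warc m u) x).ncard = (extendedSignature u).ncard := by
  choose f hf using fun c => Cplus.exists_target c x
  have hinj : f.Injective := fun c c' h => (hf c).index_unique (h ▸ hf c')
  have himage : outNbhd (warc m u) x = f '' extendedSignature u := by
    ext y
    refine warc_iff_exists_cplus.trans (exists_congr fun c => and_congr_right fun _ => ?_)
    exact ⟨fun h => (hf c).target_unique h, fun h => h ▸ hf c⟩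
  rw [himage, Set.ncard_image_of_injective _ hinj]

theorem exists_eq_add_two_mul_add_one {i j : ZMod (2 * m)} (hpar : ¬ sameParity m i j)
    (hcons : j ≠ i - 1 ∧ j ≠ i + 1) : ∃ q : ℕ, 0 < q ∧ q + 1 < m ∧ j = i + 2 * q + 1 := by
  have hd := (j - i).val_lt
  have hj : ((j - i).val : ZMod (2 * m)) = j - i := ZMod.natCast_zmod_val _
  obtain ⟨q, hq | hq⟩ := Nat.even_or_odd' (j - i).val <;> rw [hq] at hj hd <;> push_cast at hj
  · exact absurd ⟨-q, by linear_combination hj⟩ hpar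
  have hq₀ : q ≠ 0 := by
    rintro rfl
    exact hcons.2 (by push_cast at hj; linear_combination -hj)
  have hqm : q + 1 ≠ m := by
    rintro rfl
    have h₀ := zmod_half_add_half (m := q + 1)
    push_cast at h₀
    exact hcons.1 (by linear_combination h₀ - hj)
  exact ⟨q, by omega, by omega, by linear_combination -hj⟩

theorem exists_warc_not_iff_warc {i j : ZMod (2 * m)} (hpar : ¬ sameParity m i j)
    (hcons : j ≠ i - 1 ∧ j ≠ i + 1) :
    ∃ w ∈ ({some (i + 1), some (j + 1), none} : Set (WVert m)),
      ¬ (warc m u (some i) w ↔ warc m u (some j) w) := by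
  obtain ⟨q, hq₀, hq, rfl⟩ := exists_eq_add_two_mul_add_one hpar hcons
  set j := i + 2 * q + 1
  set c := i + q + 1
  have j_to_i_add_one : Cplus m c (some j) (some (i + 1)) :=
    .add_to_sub hq₀ (by omega) (by ring) (by ring)
  have i_to_j_add_one : Cplus m (c + m) (some i) (some (j + 1)) :=
    (Cplus.add_to_sub (k := q + 1) (by omega) hq (by push_cast; ring) (by push_cast; ring)).reverse
  by_contra! hagree
  have at_i_add_one : i ∈ extendedSignature u ↔ c ∈ extendedSignature u := by
    simpa only [(Cplus.to_add_one i).warc_iff, j_to_i_add_one.warc_iff]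
      using hagree (some (i + 1)) (by simp)
  have at_j_add_one : c ∉ extendedSignature u ↔ j ∈ extendedSignature u := by
    simpa only [i_to_j_add_one.warc_iff, (Cplus.to_add_one j).warc_iff,
      add_half_mem_extendedSignature_iff]
      using hagree (some (j + 1)) (by simp)
  have at_star : i ∉ extendedSignature u ↔ j ∉ extendedSignature u := by
    simpa only [(Cplus.to_star _).warc_iff, add_half_mem_extendedSignature_iff]
      using hagree none (by simp)
  tauto

end Walecki

theorem walecki_stmt9_general {m : ℕ} [NeZero m] {u : Fin m → ZMod 2} {i j : ZMod (2 * m)}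
    {x y z : WVert m} (hpar : ¬ sameParity m i j) (hcons : j ≠ i - 1 ∧ j ≠ i + 1)
    (hxy : (x = some i ∧ y = some j) ∨ (x = some j ∧ y = some i)) (ha : warc m u x y)
    (htri : dirTri (warc m u) (some i) (some j) z) :
    1 < dcount (warc m u) x y ∨ z ∈ ({some (i + 1), some (j + 1), none} : Set (WVert m)) := by
  refine or_iff_not_imp_right.2 fun hz => ?_
  obtain ⟨w, hw, hdis⟩ := exists_warc_not_iff_warc (u := u) hpar hcons
  have hwz : w ≠ z := ne_of_mem_of_not_mem hw hz
  have hwi : w ≠ some i := by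
    rcases hw with rfl | rfl | rfl
    · exact (Cplus.to_add_one i).ne.symm
    · exact fun h => hcons.1 (eq_sub_of_add_eq (Option.some.inj h))
    · exact (Option.some_ne_none i).symm
  have hwj : w ≠ some j := by
    rcases hw with rfl | rfl | rfl
    · exact fun h => hcons.2 (Option.some.inj h).symm
    · exact (Cplus.to_add_one j).ne.symm
    · exact (Option.some_ne_none j).symm
  have T := isTournament_warc (u := u)
  have hdeg : (outNbhd (warc m u) x).ncard = (outNbhd (warc m u) y).ncard :=
    (ncard_outNbhd_warc x).trans (ncard_outNbhd_warc y).symm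
  rcases hxy with ⟨rfl, rfl⟩ | ⟨rfl, rfl⟩
  · obtain ⟨hyz, hzx⟩ := T.arc_of_dirTri ha htri
    exact T.one_lt_dcount hdeg ha hyz hzx hwj hwz hdis
  · obtain ⟨hyz, hzx⟩ := T.arc_of_dirTri ha htri.swap
    exact T.one_lt_dcount hdeg ha hyz hzx hwi hwz (mt Iff.symm hdis)

/-- Let `a` be the arc of `W_u` between `i` and `j`, where `i` and `j`
have opposite parity and are not consecutive, and suppose `i`, `j`, `ℓ` induce a
directed triangle. Then `d(a) > 1`, or `ℓ ∈ {i−1, i+1, j−1, j+1}`, or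
`3 ∣ 2m+1` with `{i',j'} = {i,j}`, `j' = i' + (2m+1)/3`, `ℓ = 2j'−i'−1`, or
`3 ∣ 4m+1` with `{i',j'} = {i,j}`, `j' = i' + (4m+1)/3`, `ℓ = 2j'−i'−1`. -/
theorem walecki_stmt9 (m : ℕ) (hm : 1 ≤ m) (u : Fin m → ZMod 2)
    (i j ℓ : ZMod (2 * m))
    (hpar : ¬ sameParity m i j)
    (hcons : j ≠ i - 1 ∧ j ≠ i + 1)
    (x y : WVert m)
    (hxy : (x = some i ∧ y = some j) ∨ (x = some j ∧ y = some i))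
    (ha : warc m u x y)
    (htri : dirTri (warc m u) (some i) (some j) (some ℓ)) :
    1 < dcount (warc m u) x y ∨
    ℓ ∈ ({i - 1, i + 1, j - 1, j + 1} : Set (ZMod (2 * m))) ∨
    (3 ∣ 2 * m + 1 ∧ ∃ i' j' : ZMod (2 * m),
      ({i', j'} : Set (ZMod (2 * m))) = {i, j} ∧
      j' = i' + (((2 * m + 1) / 3 : ℕ) : ZMod (2 * m)) ∧ ℓ = 2 * j' - i' - 1) ∨
    (3 ∣ 4 * m + 1 ∧ ∃ i' j' : ZMod (2 * m),
      ({i', j'} : Set (ZMod (2 * m))) = {i, j} ∧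
      j' = i' + (((4 * m + 1) / 3 : ℕ) : ZMod (2 * m)) ∧ ℓ = 2 * j' - i' - 1) := by
  have : NeZero m := .of_pos hm
  refine (walecki_stmt9_general hpar hcons hxy ha htri).imp_right fun hℓ => .inl ?_
  rcases hℓ with hℓ | hℓ | hℓ <;> simp_all
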